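/- For every integer d ≥ 1, the formal power series C^d(x) satisfies C^d(x) = x/(1 − C^{d−1}(x)) (equivalently (1 − C^{d−1}(x))·C^d(x) = x), where C^0(x) := x, and moreover F_{d+2}(x)·C^d(x) = x·F_{d+1}(x), i.e. C^d(x) = x·F_{d+1}(x)/F_{d+2}(x). -/

import Mathlib

/-- Full binary trees (every internal node has exactly two children). -/
inductive BTree : Type
  | leaf : BTree
  | node : BTree → BTree → BTree
deriving DecidableEq

namespace BTree

/-- Number of leaves of a full binary tree. -/
def numLeaves : BTree → ℕ
  | leaf => 1
  | node l r => l.numLeaves + r.numLeaves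

/-- The list of pairs (left depth, right depth) of the leaves, in preorder. -/
def leafDepths : BTree → List (ℕ × ℕ)
  | leaf => [(0, 0)]
  | node l r =>
      (l.leafDepths.map fun p => (p.1 + 1, p.2)) ++ (r.leafDepths.map fun p => (p.1, p.2 + 1))

/-- The left depth sequence `ld(t)` of the leaves of `t`, in preorder. -/
def ld (t : BTree) : List ℕ := t.leafDepths.map Prod.fst

/-- The right depth sequence `rd(t)` of the leaves of `t`, in preorder. -/
def rd (t : BTree) : List ℕ := t.leafDepths.map Prod.snd

end BTree

/-- `b ~^d c` : the sequences have equal length and agree at every position where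
either entry is `< d`. -/
def DepthEq (d : ℕ) : List ℕ → List ℕ → Prop :=
  List.Forall₂ (fun a b => min a b < d → a = b)

/-- `b ~_k c` : entrywise congruence mod `k` (and equal length). -/
def ModListEq (k : ℕ) : List ℕ → List ℕ → Prop :=
  List.Forall₂ (fun a b => a % k = b % k)

/-- The relation `t ~ t'` iff `ld(t) ~^d ld(t')` and `rd(t) ~^e rd(t')`. -/
def DeRel (d e : ℕ) (t t' : BTree) : Prop :=
  DepthEq d t.ld t'.ld ∧ DepthEq e t.rd t'.rd

/-- The relation `t ~ t'` iff `ld(t) ~_k^d ld(t')` (i.e. `ld(t) ~_k ld(t')` and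
`ld(t) ~^d ld(t')`). -/
def DkRel (d k : ℕ) (t t' : BTree) : Prop :=
  ModListEq k t.ld t'.ld ∧ DepthEq d t.ld t'.ld

/-- `T_n`: full binary trees with `n+1` leaves. -/
def Tn (n : ℕ) : Type := {t : BTree // t.numLeaves = n + 1}

/-- `C^{d,e}_n`: the number of equivalence classes of the relation `DeRel d e` on `T_n`. -/
noncomputable def Cde (d e n : ℕ) : ℕ :=
  Nat.card (Quot (fun t t' : Tn n => DeRel d e t.1 t'.1))

/-- `C^d_{k,n}`: the number of equivalence classes of `ld(t) ~_k^d ld(t')` on `T_n`. -/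
noncomputable def Cdk (d k n : ℕ) : ℕ :=
  Nat.card (Quot (fun t t' : Tn n => DkRel d k t.1 t'.1))

/-- Fibonacci polynomials (as formal power series): `F_0 = 0`, `F_1 = 1`, and
`F_n = F_{n-1} - x·F_{n-2}` for `n ≥ 2`. -/
noncomputable def FibP : ℕ → PowerSeries ℚ
  | 0 => 0
  | 1 => 1
  | n + 2 => FibP (n + 1) - PowerSeries.X * FibP n

/-- The generating function `C^d(x) = Σ_{n≥0} C^{d,1}_n x^{n+1}`, with `C^0(x) := x`. -/
noncomputable def CdX : ℕ → PowerSeries ℚ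
  | 0 => PowerSeries.X
  | d + 1 => PowerSeries.mk fun m => match m with
      | 0 => 0
      | n + 1 => (Cde (d + 1) 1 n : ℚ)

/-! Only the left depths matter, because the right depth `0` occurs at the first leaf alone. A tree
is determined by its left depth sequence, and for `d ≥ 1` truncating this sequence at `d` gives the
left depth sequence of another tree. So each class contains exactly one tree all of whose left
depths are at most `d`. These trees also account for the convention `C^0(x) = x`, the only such tree
for `d = 0` being the leaf. Removing the root of a nonleaf tree with bound `d + 1` leaves a left
subtree with bound `d` and a right subtree with bound `d + 1`, whence
`C^{d+1}(x) = x + C^d(x) C^{d+1}(x)`. -/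

theorem depthEq_iff_map_min_eq (d : ℕ) (b c : List ℕ) :
    DepthEq d b c ↔ b.map (min d) = c.map (min d) := by
  have entry (x y : ℕ) : (min x y < d → x = y) ↔ min d x = min d y := by omega
  simp only [DepthEq, entry]
  rw [← List.forall₂_eq_eq_eq, List.forall₂_map_left_iff, List.forall₂_map_right_iff]

theorem map_min_map_succ (d : ℕ) (b : List ℕ) :
    (b.map (· + 1)).map (min (d + 1)) = (b.map (min d)).map (· + 1) := by
  simp [Function.comp_def, Nat.add_min_add_right]

theorem map_min_one_map_succ (b : List ℕ) :
    (b.map (· + 1)).map (min 1) = List.replicate b.length 1 := by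
  simp [Function.comp_def]

namespace BTree

theorem ld_node (l r : BTree) : (node l r).ld = l.ld.map (· + 1) ++ r.ld := by
  simp [ld, leafDepths, Function.comp_def]

theorem rd_node (l r : BTree) : (node l r).rd = l.rd ++ r.rd.map (· + 1) := by
  simp [rd, leafDepths, Function.comp_def]

theorem length_leafDepths (t : BTree) : t.leafDepths.length = t.numLeaves := by
  induction t with
  | leaf => rfl
  | node l r ihl ihr => simp [leafDepths, numLeaves, ihl, ihr]

theorem length_ld (t : BTree) : t.ld.length = t.numLeaves := by
  rw [ld, List.length_map, length_leafDepths]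

theorem length_rd (t : BTree) : t.rd.length = t.numLeaves := by
  rw [rd, List.length_map, length_leafDepths]

theorem numLeaves_pos (t : BTree) : 0 < t.numLeaves := by
  induction t with
  | leaf => exact Nat.one_pos
  | node l r ihl _ => exact Nat.add_pos_left ihl _

theorem ld_ne_nil (t : BTree) : t.ld ≠ [] :=
  List.ne_nil_of_length_pos (t.length_ld ▸ t.numLeaves_pos)

theorem map_min_one_rd (t : BTree) :
    t.rd.map (min 1) = 0 :: List.replicate (t.numLeaves - 1) 1 := by
  induction t with
  | leaf => rfl
  | node l r ihl _ =>
    have hsize : (node l r).numLeaves - 1 = (l.numLeaves - 1) + r.numLeaves :=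
      Nat.sub_add_comm l.numLeaves_pos
    rw [rd_node, List.map_append, ihl, map_min_one_map_succ, length_rd, hsize,
      List.replicate_add, List.cons_append]

theorem deRel_one_iff {t t' : BTree} (h : t.numLeaves = t'.numLeaves) (d : ℕ) :
    DeRel d 1 t t' ↔ t.ld.map (min d) = t'.ld.map (min d) := by
  have hrd : DepthEq 1 t.rd t'.rd := by
    rw [depthEq_iff_map_min_eq, map_min_one_rd, map_min_one_rd, h]
  rw [DeRel, and_iff_left hrd, depthEq_iff_map_min_eq]

/-- Left depth sequences form a prefix code. For the induction, `k` is the left depth at which the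
roots of `t` and `t'` sit inside larger trees. -/
theorem eq_and_eq_of_map_add_ld_append {t t' : BTree} {k : ℕ} {b b' : List ℕ}
    (h : t.ld.map (· + k) ++ b = t'.ld.map (· + k) ++ b') : t = t' ∧ b = b' := by
  have shift_ld_node (l r : BTree) (k : ℕ) (c : List ℕ) :
      (node l r).ld.map (· + k) ++ c = l.ld.map (· + (k + 1)) ++ (r.ld.map (· + k) ++ c) := by
    simp [ld_node, Function.comp_def, add_right_comm, add_assoc]
  have leaf_ne_node (l r : BTree) (k : ℕ) (c c' : List ℕ) :
      leaf.ld.map (· + k) ++ c ≠ (node l r).ld.map (· + k) ++ c' := by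
    obtain ⟨x, xs, hx⟩ := List.exists_cons_of_ne_nil l.ld_ne_nil
    have hhead : 0 + k ≠ x + (k + 1) := by omega
    rw [shift_ld_node, hx]
    exact fun h => hhead (List.cons.inj h).1
  induction t generalizing t' k b b' with
  | leaf =>
    cases t' with
    | leaf => exact ⟨rfl, List.append_cancel_left h⟩
    | node l' r' => exact absurd h (leaf_ne_node l' r' k b b')
  | node l r ihl ihr =>
    cases t' with
    | leaf => exact absurd h.symm (leaf_ne_node l r k b' b)
    | node l' r' =>
      rw [shift_ld_node, shift_ld_node] at h
      obtain ⟨rfl, hr⟩ := ihl h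
      obtain ⟨rfl, hb⟩ := ihr hr
      exact ⟨rfl, hb⟩

theorem ld_injective : Function.Injective ld := fun t t' h =>
  (eq_and_eq_of_map_add_ld_append (k := 0) (b := []) (b' := []) (by rw [h])).1

theorem ld_iterate_node_leaf (k : ℕ) (t : BTree) :
    ((node leaf)^[k] t).ld = List.replicate k 1 ++ t.ld := by
  induction k with
  | zero => rfl
  | succ k ih =>
    rw [Function.iterate_succ_apply', ld_node, ih]
    rfl

theorem exists_ld_eq_map_min_succ (d : ℕ) (t : BTree) :
    ∃ t' : BTree, t'.ld = t.ld.map (min (d + 1)) := by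
  induction t generalizing d with
  | leaf => exact ⟨leaf, rfl⟩
  | node l r ihl ihr =>
    obtain ⟨r', hr'⟩ := ihr d
    cases d with
    | zero =>
      -- `l` is flattened: its leaves, all truncated to left depth `1`, are grafted one by one.
      refine ⟨(node leaf)^[l.numLeaves] r', ?_⟩
      rw [ld_iterate_node_leaf, hr', ld_node, List.map_append, zero_add, map_min_one_map_succ,
        length_ld]
    | succ d =>
      obtain ⟨l', hl'⟩ := ihl d
      exact ⟨node l' r', by rw [ld_node, hl', hr', ld_node, List.map_append, map_min_map_succ]⟩

/-- The trees with `m` leaves, all of left depth at most `d`; for `d ≥ 1` they represent the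
classes counted by `Cde d 1`. -/
def leftBounded (d m : ℕ) : Set BTree :=
  {t | t.numLeaves = m ∧ ∀ a ∈ t.ld, a ≤ d}

theorem leftBounded_zero_right (d : ℕ) : leftBounded d 0 = ∅ :=
  Set.eq_empty_of_forall_notMem fun t ht => t.numLeaves_pos.ne' ht.1

theorem leaf_mem_leftBounded_iff {d m : ℕ} : leaf ∈ leftBounded d m ↔ m = 1 := by
  simp [leftBounded, numLeaves, ld, leafDepths, eq_comm]

theorem node_notMem_leftBounded_zero (l r : BTree) (m : ℕ) : node l r ∉ leftBounded 0 m := by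
  obtain ⟨x, xs, hx⟩ := List.exists_cons_of_ne_nil l.ld_ne_nil
  simp [leftBounded, ld_node, hx]

theorem node_mem_leftBounded_succ_iff {l r : BTree} {d m : ℕ} :
    node l r ∈ leftBounded (d + 1) m ↔ l.numLeaves + r.numLeaves = m ∧
      l ∈ leftBounded d l.numLeaves ∧ r ∈ leftBounded (d + 1) r.numLeaves := by
  simp [leftBounded, numLeaves, ld_node, or_imp, forall_and]

theorem leftBounded_zero_one : leftBounded 0 1 = {leaf} := by
  ext t
  cases t with
  | leaf => simp [leaf_mem_leftBounded_iff]
  | node l r => simp [node_notMem_leftBounded_zero]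

theorem leftBounded_zero_of_ne_one {m : ℕ} (hm : m ≠ 1) : leftBounded 0 m = ∅ := by
  ext t
  cases t with
  | leaf => simp [leaf_mem_leftBounded_iff, hm]
  | node l r => simp [node_notMem_leftBounded_zero]

instance finite_leftBounded (d m : ℕ) : Finite (leftBounded d m) := by
  refine Set.Finite.of_finite_image (f := ld) (Set.Finite.subset
    ((List.finite_length_eq (Fin (d + 1)) m).image (List.map Fin.val)) ?_) ld_injective.injOn
  rintro _ ⟨t, ⟨hm, hd⟩, rfl⟩
  have hrange : t.ld ∈ Set.range (List.map (Fin.val : Fin (d + 1) → ℕ)) := by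
    rw [Set.range_list_map]
    exact fun a ha => ⟨⟨a, Nat.lt_succ_of_le (hd a ha)⟩, rfl⟩
  obtain ⟨b, hb⟩ := hrange
  refine ⟨b, ?_, hb⟩
  rw [Set.mem_ofPred_eq, ← hm, ← length_ld, ← hb, List.length_map]

theorem range_map_min_ld (d n : ℕ) :
    Set.range (fun t : Tn n => t.1.ld.map (min (d + 1))) = ld '' leftBounded (d + 1) (n + 1) := by
  ext b
  constructor
  · rintro ⟨⟨t, ht⟩, rfl⟩
    obtain ⟨t', ht'⟩ := exists_ld_eq_map_min_succ d t
    refine ⟨t', ⟨?_, ?_⟩, ht'⟩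
    · rw [← length_ld, ht', List.length_map, length_ld, ht]
    · simp [ht']
  · rintro ⟨t, ⟨ht, hd⟩, rfl⟩
    exact ⟨⟨t, ht⟩, (List.map_congr_left fun a ha => min_eq_right (hd a ha)).trans t.ld.map_id⟩

theorem Cde_succ_one_eq_card (d n : ℕ) :
    Cde (d + 1) 1 n = Nat.card (leftBounded (d + 1) (n + 1)) := by
  let truncLd (t : Tn n) : List ℕ := t.1.ld.map (min (d + 1))
  have hrel : (fun t t' : Tn n => DeRel (d + 1) 1 t.1 t'.1) = Setoid.ker truncLd := by
    ext t t'
    exact deRel_one_iff (t.2.trans t'.2.symm) (d + 1)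
  calc Cde (d + 1) 1 n = Nat.card (Quotient (Setoid.ker truncLd)) := by
        rw [Cde, hrel]; rfl
    _ = Nat.card (Set.range truncLd) := Nat.card_congr (Setoid.quotientKerEquivRange truncLd)
    _ = Nat.card (leftBounded (d + 1) (n + 1)) := by
        rw [range_map_min_ld, Nat.card_image_of_injective ld_injective]

open Finset.HasAntidiagonal

/-- Decomposition at the root; the leaf is encoded as the only left-bounded tree for `d = 0`. -/
def leftBoundedSuccEquiv (d m : ℕ) : leftBounded (d + 1) m ≃
    leftBounded 0 m ⊕ Σ p : antidiagonal m,
      leftBounded d p.1.1 × leftBounded (d + 1) p.1.2 where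
  toFun
    | ⟨leaf, h⟩ => .inl ⟨leaf, leaf_mem_leftBounded_iff.2 (leaf_mem_leftBounded_iff.1 h)⟩
    | ⟨node l r, h⟩ =>
      have h := node_mem_leftBounded_succ_iff.1 h
      .inr ⟨⟨(l.numLeaves, r.numLeaves), mem_antidiagonal.2 h.1⟩, ⟨l, h.2.1⟩, ⟨r, h.2.2⟩⟩
  invFun
    | .inl t => ⟨t, t.2.1, fun a ha => (t.2.2 a ha).trans (Nat.zero_le _)⟩
    | .inr ⟨⟨(i, j), hij⟩, l, r⟩ => ⟨node l r, node_mem_leftBounded_succ_iff.2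
        ⟨by rw [l.2.1, r.2.1]; exact mem_antidiagonal.1 hij, ⟨rfl, l.2.2⟩, ⟨rfl, r.2.2⟩⟩⟩
  left_inv
    | ⟨leaf, _⟩ => rfl
    | ⟨node _ _, _⟩ => rfl
  right_inv
    | .inl ⟨leaf, _⟩ => rfl
    | .inl ⟨node l r, h⟩ => absurd h (node_notMem_leftBounded_zero l r m)
    | .inr ⟨⟨(_, _), _⟩, ⟨_, rfl, _⟩, ⟨_, rfl, _⟩⟩ => rfl

theorem card_leftBounded_succ (d m : ℕ) :
    Nat.card (leftBounded (d + 1) m) = Nat.card (leftBounded 0 m) +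
      ∑ p ∈ antidiagonal m,
        Nat.card (leftBounded d p.1) * Nat.card (leftBounded (d + 1) p.2) := by
  rw [Nat.card_congr (leftBoundedSuccEquiv d m), Nat.card_sum, Nat.card_sigma,
    ← Finset.sum_coe_sort (antidiagonal m)]
  simp only [Nat.card_prod]

end BTree

open BTree PowerSeries

theorem coeff_CdX (d m : ℕ) : coeff m (CdX d) = (Nat.card (leftBounded d m) : ℚ) := by
  cases d with
  | zero =>
    by_cases hm : m = 1
    · simp [CdX, hm, leftBounded_zero_one]
    · simp [CdX, coeff_X, hm, leftBounded_zero_of_ne_one]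
  | succ d =>
    cases m with
    | zero => simp [CdX, leftBounded_zero_right]
    | succ n => simp [CdX, Cde_succ_one_eq_card]

theorem CdX_succ (d : ℕ) : CdX (d + 1) = X + CdX d * CdX (d + 1) := by
  change CdX (d + 1) = CdX 0 + CdX d * CdX (d + 1)
  ext m
  simp only [map_add, coeff_mul, coeff_CdX]
  exact_mod_cast card_leftBounded_succ d m

theorem FibP_mul_CdX (d : ℕ) : FibP (d + 2) * CdX d = X * FibP (d + 1) := by
  induction d with
  | zero => simp [FibP, CdX]
  | succ d ih =>
    have hFib : FibP (d + 3) = FibP (d + 2) - X * FibP (d + 1) := rfl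
    linear_combination CdX (d + 1) * (hFib + ih) + FibP (d + 2) * CdX_succ d

/-- for `d ≥ 1`, `(1 - C^{d-1}(x))·C^d(x) = x` (where `C^0(x) := x`), and
`F_{d+2}(x)·C^d(x) = x·F_{d+1}(x)`. -/
theorem stmt4 (d : ℕ) (hd : 1 ≤ d) :
    (1 - CdX (d - 1)) * CdX d = PowerSeries.X ∧
    FibP (d + 2) * CdX d = PowerSeries.X * FibP (d + 1) := by
  obtain ⟨d, rfl⟩ := Nat.exists_eq_add_of_le' hd
  refine ⟨?_, FibP_mul_CdX (d + 1)⟩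
  rw [Nat.add_sub_cancel]
  linear_combination CdX_succ d
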